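/- Fix an integer d ≥ 2. Every σ_d-rotational set A ⊆ T is the union of at most d−1 orbits under σ_d; that is, the number of distinct orbits whose union is A is at most d−1. Equivalently, if A is σ_d-rotational with rotation number p/q then gcd(p,q) ≤ d−1. -/

import Mathlib

/-- The angle-multiplying map `σ_d : 𝕋 → 𝕋`, where the circle `𝕋 = ℝ/ℤ` is identified with
the set of representatives `[0,1) ⊆ ℝ` (and so ordered by comparing these representatives). -/
noncomputable def sigmad (d : ℕ) (t : ℝ) : ℝ := Int.fract (d * t)

/-- The orbit of a point of the circle under `σ_d`. -/
def sigmaOrbit (d : ℕ) (t : ℝ) : Set ℝ := {s | ∃ k : ℕ, (sigmad d)^[k] t = s}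

/-- `t : ZMod q → ℝ` lists (with indices viewed in `ℤ/qℤ`) the elements
`t 0 < t 1 < ⋯ < t (q-1)` of a `σ_d`-rotational set with rotation number `p/q`. -/
def IsRotational (d q : ℕ) (p : ZMod q) (t : ZMod q → ℝ) : Prop :=
  (∀ i, t i ∈ Set.Ico (0:ℝ) 1) ∧
  (∀ i j : ZMod q, i.val < j.val → t i < t j) ∧
  p ≠ 0 ∧
  ∀ i, sigmad d (t i) = t (i + p)

theorem rot_gcd_le (d q : ℕ) (hd : 2 ≤ d) [NeZero q] (p : ZMod q)
    (t : ZMod q → ℝ) (h : IsRotational d q p t) : Nat.gcd p.val q ≤ d - 1 := by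
  obtain ⟨h01, hmono, hp, hs⟩ := h
  have hG : Nat.gcd p.val q ∣ q := Nat.gcd_dvd_right _ _
  have hGp : Nat.gcd p.val q ∣ p.val := Nat.gcd_dvd_left _ _
  have hGpos : 0 < Nat.gcd p.val q := Nat.gcd_pos_of_pos_right _ (NeZero.pos q)
  generalize Nat.gcd p.val q = G at *
  haveI : NeZero G := ⟨hGpos.ne'⟩
  let c : ZMod q →+* ZMod G := ZMod.castHom hG (ZMod G)
  have hcp : c p = 0 := by
    have h1 : c ((p.val : ℕ) : ZMod q) = ((p.val : ℕ) : ZMod G) := map_natCast c _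
    rw [ZMod.natCast_zmod_val] at h1
    rw [h1]
    exact (ZMod.natCast_eq_zero_iff _ _).2 hGp
  let e : ZMod q → ℤ := fun i => if i = -1 then 1 else 0
  let g : ZMod q → ℝ := fun i => t (i + 1) - t i + e i
  let n : ZMod q → ℤ := fun i => ⌊(d : ℝ) * t i⌋
  have hn : ∀ i, (d : ℝ) * t i = t (i + p) + n i := by
    intro i
    have := hs i
    unfold sigmad at this
    rw [← this]
    exact (Int.fract_add_floor _).symm
  have hgpos : ∀ i, 0 < g i := by
    intro i
    by_cases hi : i = -1
    · have h1 := h01 (i + 1)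
      have h2 := h01 i
      simp only [g, e, hi, if_true] at *
      push_cast
      linarith [h1.1, h2.2]
    · have h3 : i.val + 1 < q := by
        have h4 := ZMod.val_lt i
        rcases Nat.lt_or_ge (i.val + 1) q with h5 | h5
        · exact h5
        · exfalso
          have h6 : i.val + 1 = q := by omega
          apply hi
          have h7 : ((i.val + 1 : ℕ) : ZMod q) = 0 := by rw [h6]; simp
          rw [Nat.cast_add, ZMod.natCast_zmod_val, Nat.cast_one] at h7
          exact eq_neg_of_add_eq_zero_left h7
      have h8 : (i + 1).val = i.val + 1 := by
        have h9 : (i + 1) = ((i.val + 1 : ℕ) : ZMod q) := by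
          rw [Nat.cast_add, ZMod.natCast_zmod_val, Nat.cast_one]
        rw [h9, ZMod.val_natCast, Nat.mod_eq_of_lt h3]
      have := hmono i (i + 1) (by omega)
      simp only [g, e, hi, if_false]
      push_cast
      linarith
  let m : ZMod q → ℤ := fun i => n (i + 1) - n i + d * e i - e (i + p)
  have hm : ∀ i, (m i : ℝ) = d * g i - g (i + p) := by
    intro i
    have h1 := hn i
    have h2 := hn (i + 1)
    have h3 : i + 1 + p = i + p + 1 := by ring
    rw [h3] at h2
    simp only [m, g]
    push_cast
    linarith
  have hgsum : ∑ i, g i = 1 := by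
    simp only [g, Finset.sum_add_distrib, Finset.sum_sub_distrib]
    have h6 : ∑ i, t (i + 1) = ∑ i, t i := Equiv.sum_comp (Equiv.addRight (1 : ZMod q)) t
    rw [h6]
    simp [e]
  have hd1 : (1 : ℝ) ≤ (d : ℝ) - 1 := by
    have : (2 : ℝ) ≤ d := by exact_mod_cast hd
    linarith
  have hclass : ∀ r : ZMod G, (1 : ℤ) ≤ ∑ i with c i = r, m i := by
    intro r
    have h1 : ∑ i with c i = r, g (i + p) = ∑ i with c i = r, g i := by
      apply Finset.sum_equiv (Equiv.addRight p)
      · intro i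
        simp [hcp]
      · intro i _
        rfl
    have h2 : ((∑ i with c i = r, m i : ℤ) : ℝ) = (d - 1) * ∑ i with c i = r, g i := by
      push_cast
      simp only [hm, Finset.sum_sub_distrib]
      rw [h1, ← Finset.mul_sum]
      ring
    have h3 : 0 < ∑ i with c i = r, g i := by
      apply Finset.sum_pos (fun i _ => hgpos i)
      obtain ⟨i, hi⟩ := ZMod.ringHom_surjective c r
      exact ⟨i, by simp [hi]⟩
    have h4 : (0 : ℝ) < ((∑ i with c i = r, m i : ℤ) : ℝ) := by
      rw [h2]
      exact mul_pos (by linarith) h3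
    have h5 : (0 : ℤ) < ∑ i with c i = r, m i := by exact_mod_cast h4
    omega
  have htot : ∑ i, m i = (d : ℤ) - 1 := by
    have h2 : ((∑ i, m i : ℤ) : ℝ) = (d : ℝ) - 1 := by
      push_cast
      simp only [hm, Finset.sum_sub_distrib]
      have h6 : ∑ i, g (i + p) = ∑ i, g i := Equiv.sum_comp (Equiv.addRight p) g
      rw [h6, ← Finset.mul_sum, hgsum]
      ring
    exact_mod_cast h2
  have hfin : ∑ r : ZMod G, (1 : ℤ) ≤ ∑ r : ZMod G, ∑ i with c i = r, m i :=
    Finset.sum_le_sum (fun r _ => hclass r)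
  rw [Finset.sum_fiberwise, htot] at hfin
  simp [ZMod.card] at hfin
  omega

theorem rot_iter (d q : ℕ) (p : ZMod q) (t : ZMod q → ℝ) (h : IsRotational d q p t)
    (k : ℕ) : ∀ i : ZMod q, (sigmad d)^[k] (t i) = t (i + k * p) := by
  induction k with
  | zero => intro i; simp
  | succ k ih =>
    intro i
    rw [Function.iterate_succ_apply, h.2.2.2 i, ih]
    congr 1
    push_cast
    ring

theorem rot_orbit_sub (d q : ℕ) [NeZero q] (p : ZMod q) (t : ZMod q → ℝ)
    (h : IsRotational d q p t) (i j : ZMod q)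
    (hij : ((Nat.gcd p.val q : ℕ) : ZMod q) ∣ j - i) :
    sigmaOrbit d (t j) ⊆ sigmaOrbit d (t i) := by
  obtain ⟨w, hw⟩ := hij
  have hb : ((Nat.gcd p.val q : ℕ) : ZMod q) = p * (Nat.gcdA p.val q : ℤ) := by
    have h1 := congrArg (Int.cast : ℤ → ZMod q) (Nat.gcd_eq_gcd_ab p.val q)
    push_cast at h1
    simpa using h1
  rintro s ⟨k, hk⟩
  refine ⟨k + (((Nat.gcdA p.val q : ℤ) : ZMod q) * w).val, ?_⟩
  rw [← hk, rot_iter d q p t h, rot_iter d q p t h]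
  congr 1
  push_cast
  rw [ZMod.natCast_zmod_val]
  rw [hb] at hw
  linear_combination -hw

theorem rot_orbits (d q : ℕ) [NeZero q] (p : ZMod q) (t : ZMod q → ℝ)
    (h : IsRotational d q p t) :
    {O : Set ℝ | ∃ x ∈ Set.range t, O = sigmaOrbit d x}.ncard ≤ Nat.gcd p.val q := by
  have hGpos : 0 < Nat.gcd p.val q := Nat.gcd_pos_of_pos_right _ (NeZero.pos q)
  have hsub : {O : Set ℝ | ∃ x ∈ Set.range t, O = sigmaOrbit d x} ⊆
      (fun r : ℕ => sigmaOrbit d (t (r : ZMod q))) ''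
        (Finset.range (Nat.gcd p.val q) : Set ℕ) := by
    rintro O ⟨x, ⟨i, rfl⟩, rfl⟩
    refine ⟨i.val % Nat.gcd p.val q, by simpa using Nat.mod_lt _ hGpos, ?_⟩
    have h1 : ((Nat.gcd p.val q : ℕ) : ZMod q) ∣
        i - ((i.val % Nat.gcd p.val q : ℕ) : ZMod q) := by
      refine ⟨((i.val / Nat.gcd p.val q : ℕ) : ZMod q), ?_⟩
      have h2 := congrArg (Nat.cast : ℕ → ZMod q) (Nat.mod_add_div i.val (Nat.gcd p.val q))
      rw [Nat.cast_add, Nat.cast_mul, ZMod.natCast_zmod_val] at h2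
      linear_combination -h2
    apply Set.Subset.antisymm
    · apply rot_orbit_sub d q p t h
      rw [← neg_sub]
      exact (dvd_neg).2 h1
    · exact rot_orbit_sub d q p t h _ _ h1
  refine (Set.ncard_le_ncard hsub ((Finset.finite_toSet _).image _)).trans ?_
  refine (Set.ncard_image_le (Finset.finite_toSet _)).trans ?_
  rw [Set.ncard_coe_finset, Finset.card_range]

theorem stmt12 (d q : ℕ) (hd : 2 ≤ d) (hq : 1 ≤ q) (p : ZMod q)
    (t : ZMod q → ℝ) (h : IsRotational d q p t) :
    -- the number of distinct orbits whose union is `A = range t` is at most `d-1`,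
    -- equivalently `gcd(p,q) ≤ d-1`
    {O : Set ℝ | ∃ x ∈ Set.range t, O = sigmaOrbit d x}.ncard ≤ d - 1 ∧
    Nat.gcd p.val q ≤ d - 1 := by
  haveI : NeZero q := ⟨by omega⟩
  have h1 := rot_gcd_le d q hd p t h
  exact ⟨(rot_orbits d q p t h).trans h1, h1⟩
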